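/- Suppose there exist η₁, η₂ ≥ 0 with S(η₁,η₂) > 0, T₁(η₁) > 0 and T₂(η₂) > 0. Then for all t₁, t₂ ≥ 0 and all natural numbers m, n, the mixed moment E[L₁(t₁)^m · L₂(t₂)^n] is finite. -/

import Mathlib

open MeasureTheory ProbabilityTheory

/-!
If `L` is the inverse of `H`, then `L(t) > x` forces `H(x) ≤ t`, so Chernoff's bound
`P(H(x) ≤ t) ≤ exp(η t) E[exp(-η H(x))]` turns the exponential decay in `x` of the Laplace transform
into an exponential tail of `L(t)`. The maximum of `L₁(t₁)` and `L₂(t₂)` then has an exponential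
tail by the union bound, whatever their joint law, hence has all moments, and
`L₁(t₁)^m L₂(t₂)^n ≤ max(L₁(t₁), L₂(t₂))^(m + n)`.
-/

section ExponentialTail

variable {Ω : Type*} [MeasurableSpace Ω] {μ : Measure Ω} {f g : Ω → ℝ}

/-- The upper tail of `f` decays at least exponentially. The function need not be measurable:
`μ {ω | x < f ω}` is then an outer measure. -/
def HasExponentialTail (f : Ω → ℝ) (μ : Measure Ω) : Prop :=
  ∃ C < (⊤ : ENNReal), ∃ c > 0, ∀ x : ℝ, 0 ≤ x →
    μ {ω | x < f ω} ≤ C * ENNReal.ofReal (Real.exp (-(c * x)))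

theorem HasExponentialTail.sup (hf : HasExponentialTail f μ) (hg : HasExponentialTail g μ) :
    HasExponentialTail (f ⊔ g) μ := by
  obtain ⟨C, hC, c, hc, hfC⟩ := hf
  obtain ⟨D, hD, d, hd, hgD⟩ := hg
  refine ⟨C + D, ENNReal.add_lt_top.2 ⟨hC, hD⟩, min c d, lt_min hc hd, fun x hx => ?_⟩
  calc μ {ω | x < (f ⊔ g) ω}
      = μ ({ω | x < f ω} ∪ {ω | x < g ω}) := by
        simp only [Pi.sup_apply, lt_sup_iff, Set.ofPred_or]
    _ ≤ μ {ω | x < f ω} + μ {ω | x < g ω} := measure_union_le _ _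
    _ ≤ C * ENNReal.ofReal (Real.exp (-(c * x))) + D * ENNReal.ofReal (Real.exp (-(d * x))) :=
        add_le_add (hfC x hx) (hgD x hx)
    _ ≤ C * ENNReal.ofReal (Real.exp (-(min c d * x)))
          + D * ENNReal.ofReal (Real.exp (-(min c d * x))) := by
        gcongr
        · exact min_le_left c d
        · exact min_le_right c d
    _ = (C + D) * ENNReal.ofReal (Real.exp (-(min c d * x))) := (add_mul _ _ _).symm

theorem ofReal_pow_le_one_add_tsum_indicator_Ioi (x : ℝ) (k : ℕ) :
    ENNReal.ofReal x ^ k ≤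
      1 + ∑' j : ℕ,
        (Set.Ioi (j : ℝ)).indicator (fun _ => ENNReal.ofReal (((j : ℝ) + 1) ^ k)) x := by
  rcases le_or_gt x 0 with hx | hx
  · rw [ENNReal.ofReal_of_nonpos hx]
    exact (pow_le_one' zero_le_one k).trans le_self_add
  obtain ⟨j, hj⟩ := Nat.exists_eq_succ_of_ne_zero (Nat.ceil_pos.2 hx).ne'
  have hjx : (j : ℝ) < x := Nat.lt_ceil.1 (by omega)
  have hxj : x ≤ (j : ℝ) + 1 := by exact_mod_cast Nat.ceil_le.1 hj.le
  calc ENNReal.ofReal x ^ k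
      = ENNReal.ofReal (x ^ k) := (ENNReal.ofReal_pow hx.le k).symm
    _ ≤ ENNReal.ofReal (((j : ℝ) + 1) ^ k) := by gcongr
    _ = (Set.Ioi (j : ℝ)).indicator (fun _ => ENNReal.ofReal (((j : ℝ) + 1) ^ k)) x :=
        by
        rw [Set.indicator_of_mem (Set.mem_Ioi.2 hjx)]
    _ ≤ _ := (ENNReal.le_tsum j).trans le_add_self

theorem lintegral_ofReal_pow_le_measure_univ_add_tsum (μ : Measure Ω) (f : Ω → ℝ) (k : ℕ) :
    ∫⁻ ω, ENNReal.ofReal (f ω) ^ k ∂μ ≤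
      μ Set.univ + ∑' j : ℕ, ENNReal.ofReal (((j : ℝ) + 1) ^ k) * μ {ω | j < f ω} := by
  -- `lintegral_tsum` needs measurable summands, so each `{j < f}` is replaced by a measurable hull.
  let A (j : ℕ) : Set Ω := toMeasurable μ {ω | j < f ω}
  let w (j : ℕ) : ENNReal := ENNReal.ofReal (((j : ℝ) + 1) ^ k)
  have hA (j : ℕ) : MeasurableSet (A j) := measurableSet_toMeasurable _ _
  have hpointwise (ω : Ω) :
      ENNReal.ofReal (f ω) ^ k ≤ 1 + ∑' j, (A j).indicator (fun _ => w j) ω := by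
    refine (ofReal_pow_le_one_add_tsum_indicator_Ioi (f ω) k).trans ?_
    gcongr with j
    exact Set.indicator_le_indicator_of_subset (f := fun _ => w j)
      (subset_toMeasurable μ {ω | j < f ω}) (fun _ => zero_le) ω
  calc ∫⁻ ω, ENNReal.ofReal (f ω) ^ k ∂μ
      ≤ ∫⁻ ω, 1 + ∑' j, (A j).indicator (fun _ => w j) ω ∂μ := lintegral_mono hpointwise
    _ = μ Set.univ + ∑' j, w j * μ (A j) := by
        rw [lintegral_add_left measurable_const, lintegral_one,
          lintegral_tsum fun j => (measurable_const.indicator (hA j)).aemeasurable]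
        simp only [lintegral_indicator_const (hA _)]
    _ = μ Set.univ + ∑' j, w j * μ {ω | j < f ω} := by simp only [A, measure_toMeasurable]

theorem summable_add_one_pow_mul_exp_neg_mul (k : ℕ) {c : ℝ} (hc : 0 < c) :
    Summable fun j : ℕ => ((j : ℝ) + 1) ^ k * Real.exp (-(c * j)) := by
  have hshift := (summable_nat_add_iff 1).2 (Real.summable_pow_mul_exp_neg_nat_mul k hc)
  refine (hshift.mul_left (Real.exp c)).congr fun j => ?_
  rw [mul_left_comm, ← Real.exp_add]
  push_cast
  ring_nf

theorem HasExponentialTail.lintegral_ofReal_pow_lt_top [IsFiniteMeasure μ]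
    (hf : HasExponentialTail f μ) (k : ℕ) : ∫⁻ ω, ENNReal.ofReal (f ω) ^ k ∂μ < ⊤ := by
  obtain ⟨C, hC, c, hc, hfC⟩ := hf
  refine (lintegral_ofReal_pow_le_measure_univ_add_tsum μ f k).trans_lt
    (ENNReal.add_lt_top.2 ⟨measure_lt_top μ _, ?_⟩)
  calc ∑' j : ℕ, ENNReal.ofReal (((j : ℝ) + 1) ^ k) * μ {ω | j < f ω}
      ≤ ∑' j : ℕ, ENNReal.ofReal (((j : ℝ) + 1) ^ k)
          * (C * ENNReal.ofReal (Real.exp (-(c * j)))) := by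
        gcongr with j
        exact hfC j j.cast_nonneg
    _ = C * ∑' j : ℕ, ENNReal.ofReal (((j : ℝ) + 1) ^ k * Real.exp (-(c * j))) := by
        rw [← ENNReal.tsum_mul_left]
        refine tsum_congr fun j => ?_
        rw [mul_left_comm, ENNReal.ofReal_mul (by positivity)]
    _ < ⊤ := ENNReal.mul_lt_top hC (summable_add_one_pow_mul_exp_neg_mul k hc).tsum_ofReal_lt_top

theorem HasExponentialTail.lintegral_pow_mul_pow_lt_top [IsFiniteMeasure μ]
    (hf : HasExponentialTail f μ) (hg : HasExponentialTail g μ)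
    (hf₀ : ∀ ω, 0 ≤ f ω) (hg₀ : ∀ ω, 0 ≤ g ω) (m n : ℕ) :
    ∫⁻ ω, ENNReal.ofReal (f ω ^ m * g ω ^ n) ∂μ < ⊤ := by
  refine lt_of_le_of_lt (lintegral_mono fun ω => ?_)
    ((hf.sup hg).lintegral_ofReal_pow_lt_top (m + n))
  rw [ENNReal.ofReal_mul (pow_nonneg (hf₀ ω) m), ENNReal.ofReal_pow (hf₀ ω),
    ENNReal.ofReal_pow (hg₀ ω), pow_add]
  gcongr
  · exact le_max_left _ _
  · exact le_max_right _ _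

end ExponentialTail

section FirstPassage

/-- The infimum of the times `x ≥ 0` at which the path `h` exceeds the level `t`, that is,
the value at `t` of the right-continuous inverse of `h`. It is `0` if `h` never
exceeds `t` on `[0, ∞)`. -/
noncomputable def firstPassageTime (h : ℝ → ℝ) (t : ℝ) : ℝ :=
  sInf {x : ℝ | 0 ≤ x ∧ h x > t}

theorem firstPassageTime_nonneg (h : ℝ → ℝ) (t : ℝ) : 0 ≤ firstPassageTime h t :=
  Real.sInf_nonneg fun _ hx => hx.1

theorem le_of_lt_firstPassageTime {h : ℝ → ℝ} {t x : ℝ} (hx : 0 ≤ x)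
    (hxt : x < firstPassageTime h t) : h x ≤ t :=
  le_of_not_gt fun hlt => hxt.not_ge (csInf_le ⟨0, fun _ hy => hy.1⟩ ⟨hx, hlt⟩)

variable {Ω : Type*} [MeasurableSpace Ω] {P : Measure Ω} [IsFiniteMeasure P]

theorem measure_lt_firstPassageTime_le {H : ℝ → Ω → ℝ} (hH₀ : ∀ᵐ ω ∂P, 0 ≤ H 0 ω)
    {η x : ℝ} (hη : 0 ≤ η) (hx : 0 ≤ x)
    (hint : Integrable (fun ω => Real.exp (-η * (H x - H 0) ω)) P) (t : ℝ) :
    P {ω | x < firstPassageTime (fun y => H y ω) t} ≤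
      ENNReal.ofReal (Real.exp (η * t) * mgf (H x - H 0) P (-η)) := by
  calc P {ω | x < firstPassageTime (fun y => H y ω) t}
      ≤ P {ω | (H x - H 0) ω ≤ t} := by
        refine measure_mono_ae ?_
        filter_upwards [hH₀] with ω hω hlt
        exact (sub_le_self _ hω).trans (le_of_lt_firstPassageTime hx hlt)
    _ = ENNReal.ofReal (P.real {ω | (H x - H 0) ω ≤ t}) := (ofReal_measureReal).symm
    _ ≤ ENNReal.ofReal (Real.exp (η * t) * mgf (H x - H 0) P (-η)) := by
        gcongr
        simpa only [neg_neg] using measure_le_le_exp_mul_mgf t (neg_nonpos.2 hη) hint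

theorem hasExponentialTail_firstPassageTime {H : ℝ → Ω → ℝ} (hH₀ : ∀ᵐ ω ∂P, 0 ≤ H 0 ω)
    {η c : ℝ} (hη : 0 ≤ η) (hc : 0 < c)
    (hmgf : ∀ x, 0 ≤ x → mgf (H x - H 0) P (-η) = Real.exp (-(c * x))) (t : ℝ) :
    HasExponentialTail (fun ω => firstPassageTime (fun x => H x ω) t) P := by
  refine ⟨ENNReal.ofReal (Real.exp (η * t)), ENNReal.ofReal_lt_top, c, hc, fun x hx => ?_⟩
  have hint : Integrable (fun ω => Real.exp (-η * (H x - H 0) ω)) P :=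
    .of_integral_ne_zero ((hmgf x hx).trans_ne (Real.exp_ne_zero _))
  rw [← ENNReal.ofReal_mul (Real.exp_nonneg _), ← hmgf x hx]
  exact measure_lt_firstPassageTime_le hH₀ hη hx hint t

end FirstPassage

theorem inverse_bivariate_subordinator_moments_finite_general
    {Ω : Type*} [MeasurableSpace Ω] (P : Measure Ω) [IsFiniteMeasure P]
    (H1 H2 : ℝ → Ω → ℝ) (hH1 : ∀ᵐ ω ∂P, 0 ≤ H1 0 ω) (hH2 : ∀ᵐ ω ∂P, 0 ≤ H2 0 ω)
    {η1 η2 c1 c2 : ℝ} (hη1 : 0 ≤ η1) (hη2 : 0 ≤ η2) (hc1 : 0 < c1) (hc2 : 0 < c2)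
    (hmgf1 : ∀ x, 0 ≤ x → mgf (H1 x - H1 0) P (-η1) = Real.exp (-(c1 * x)))
    (hmgf2 : ∀ x, 0 ≤ x → mgf (H2 x - H2 0) P (-η2) = Real.exp (-(c2 * x)))
    (t1 t2 : ℝ) (m n : ℕ) :
    ∫⁻ ω, ENNReal.ofReal (firstPassageTime (fun x => H1 x ω) t1 ^ m *
      firstPassageTime (fun x => H2 x ω) t2 ^ n) ∂P < ⊤ :=
  (hasExponentialTail_firstPassageTime hH1 hη1 hc1 hmgf1 t1).lintegral_pow_mul_pow_lt_top
    (hasExponentialTail_firstPassageTime hH2 hη2 hc2 hmgf2 t2)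
    (fun _ => firstPassageTime_nonneg _ _) (fun _ => firstPassageTime_nonneg _ _) m n

/-- If there are `η₁, η₂ ≥ 0` with `S(η₁,η₂) > 0`,
`T₁(η₁) = S(η₁,0) > 0` and `T₂(η₂) = S(0,η₂) > 0`, then all mixed moments
`E[L₁(t₁)^m L₂(t₂)^n]` are finite. -/
theorem inverse_bivariate_subordinator_moments_finite
    {Ω : Type*} [MeasurableSpace Ω] (P : Measure Ω) [IsProbabilityMeasure P]
    (H1 H2 : ℝ → Ω → ℝ) (S : ℝ → ℝ → ℝ)
    (hH1meas : Measurable (Function.uncurry H1))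
    (hH2meas : Measurable (Function.uncurry H2))
    (hH1nonneg : ∀ x ω, 0 ≤ H1 x ω) (hH2nonneg : ∀ x ω, 0 ≤ H2 x ω)
    (hzero : ∀ᵐ ω ∂P, H1 0 ω = 0 ∧ H2 0 ω = 0)
    (hSnonneg : ∀ α β : ℝ, 0 ≤ α → 0 ≤ β → 0 ≤ S α β)
    (hindep : ∀ s t : ℝ, 0 ≤ s → s ≤ t →
      IndepFun (fun ω => (H1 t ω - H1 s ω, H2 t ω - H2 s ω))
        (fun ω => (H1 s ω, H2 s ω)) P)
    (hincr : ∀ s t α β : ℝ, 0 ≤ s → s ≤ t → 0 ≤ α → 0 ≤ β →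
      ∫ ω, Real.exp (-(α * (H1 t ω - H1 s ω)) - β * (H2 t ω - H2 s ω)) ∂P
        = Real.exp (-(t - s) * S α β))
    (hpath : ∀ᵐ ω ∂P,
      (∀ x y : ℝ, 0 ≤ x → x ≤ y → H1 x ω ≤ H1 y ω) ∧
      (∀ M : ℝ, ∃ x : ℝ, 0 ≤ x ∧ H1 x ω > M) ∧
      (∀ x y : ℝ, 0 ≤ x → x ≤ y → H2 x ω ≤ H2 y ω) ∧
      (∀ M : ℝ, ∃ x : ℝ, 0 ≤ x ∧ H2 x ω > M))
    (L1 L2 : ℝ → Ω → ℝ)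
    (hL1 : ∀ t ω, L1 t ω = sInf {x : ℝ | 0 ≤ x ∧ H1 x ω > t})
    (hL2 : ∀ t ω, L2 t ω = sInf {x : ℝ | 0 ≤ x ∧ H2 x ω > t})
    (hpos : ∃ η1 η2 : ℝ, 0 ≤ η1 ∧ 0 ≤ η2 ∧
      0 < S η1 η2 ∧ 0 < S η1 0 ∧ 0 < S 0 η2)
    (t1 t2 : ℝ) (ht1 : 0 ≤ t1) (ht2 : 0 ≤ t2) (m n : ℕ) :
    ∫⁻ ω, ENNReal.ofReal (L1 t1 ω ^ m * L2 t2 ω ^ n) ∂P < ⊤ := by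
  obtain ⟨η1, η2, hη1, hη2, -, hS1, hS2⟩ := hpos
  simp only [hL1, hL2]
  exact inverse_bivariate_subordinator_moments_finite_general P H1 H2
    (ae_of_all P (hH1nonneg 0)) (ae_of_all P (hH2nonneg 0)) hη1 hη2 hS1 hS2
    (fun x hx => by simpa [mgf, mul_comm x] using hincr 0 x η1 0 le_rfl hx hη1 le_rfl)
    (fun x hx => by simpa [mgf, mul_comm x] using hincr 0 x 0 η2 le_rfl hx le_rfl hη2) t1 t2 m n
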